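/- arXiv:2602.23970 — 2 statements merged into one kernel-verified Lean document; each statement's English description precedes it below -/
import Mathlib

section
/- Let σ ∈ Γ. Then there exists a sequence (u_n)_{n≥1} of unit vectors in 𝔥 such that for every n ≥ 1 and every k ∈ {0, 1, ..., n}, Ξ_k u_n = ε_σ(k) • u_n, where ε_σ(k) := 2·1_σ(k) − 1 (that is, ε_σ(k) = 1 if k ∈ σ and ε_σ(k) = −1 if k ∉ σ). -/
noncomputable section

/-- The Hilbert space `𝔥 = ℓ²(Γ)` with `Γ = Finset ℕ`. -/
abbrev H : Type := lp (fun _ : Finset ℕ => ℂ) 2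

/-- The canonical orthonormal basis vector `Z_σ`. -/
noncomputable def Z (σ : Finset ℕ) : H := lp.single 2 σ (1 : ℂ)

/-!
On the span of the `b τ` with `τ ⊆ s`, the maps `b τ ↦ b (τ ∆ {k})`, `k ∈ s`, generate the regular
representation of the group `(ℤ/2)^s` of subsets of `s`. Signs `ε` on `s` define the character
`τ ↦ ∏ j ∈ τ, ε j` of this group, and the sum of the `b τ` weighted by this character is a joint
eigenvector.
-/

section FinsetSymmDiff

variable {ι : Type*} [DecidableEq ι] {k : ι}

theorem symmDiff_singleton_subset_iff {s : Finset ι} (hk : k ∈ s) (τ : Finset ι) :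
    symmDiff τ {k} ⊆ s ↔ τ ⊆ s := by
  have subset_of_subset {τ : Finset ι} (hτ : τ ⊆ s) : symmDiff τ {k} ⊆ s :=
    symmDiff_le_sup.trans (sup_le hτ (Finset.singleton_subset_iff.2 hk))
  refine ⟨fun h => ?_, subset_of_subset⟩
  simpa only [symmDiff_symmDiff_cancel_right] using subset_of_subset h

theorem prod_symmDiff_singleton {M : Type*} [CommMonoid M] {f : ι → M} (hf : f k * f k = 1)
    (τ : Finset ι) : ∏ j ∈ symmDiff τ {k}, f j = f k * ∏ j ∈ τ, f j := by
  by_cases hk : k ∈ τ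
  · have erase_eq : symmDiff τ {k} = τ.erase k := by
      rw [symmDiff_of_ge (Finset.singleton_subset_iff.2 hk), Finset.sdiff_singleton_eq_erase]
    rw [erase_eq, ← Finset.mul_prod_erase τ f hk, ← mul_assoc, hf, one_mul]
  · rw [(Finset.disjoint_singleton_right.2 hk).symmDiff_eq_sup, Finset.sup_eq_union,
      Finset.union_singleton, Finset.prod_insert hk]

end FinsetSymmDiff

section CharacterSum

variable {ι R M : Type*} [CommRing R] [AddCommGroup M] [Module R M]

/-- The sum of the vectors `b τ` over `τ ⊆ s`, weighted by the character `τ ↦ ∏ j ∈ τ, ε j`.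
For signs `ε` it is the joint eigenvector, with eigenvalues `ε k`, of the flips
`b τ ↦ b (τ ∆ {k})` for `k ∈ s`. -/
def characterSum (b : Finset ι → M) (ε : ι → R) (s : Finset ι) : M :=
  ∑ τ ∈ s.powerset, (∏ j ∈ τ, ε j) • b τ

theorem characterSum_ne_zero [Nontrivial R] {b : Finset ι → M} (hb : LinearIndependent R b)
    (ε : ι → R) (s : Finset ι) : characterSum b ε s ≠ 0 := by
  intro h
  have coeff_empty : ∏ j ∈ (∅ : Finset ι), ε j = 0 :=
    linearIndependent_iff'.1 hb s.powerset (fun τ => ∏ j ∈ τ, ε j) h ∅ (Finset.empty_mem_powerset s)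
  exact one_ne_zero (Finset.prod_empty.symm.trans coeff_empty)

theorem map_characterSum [DecidableEq ι] {b : Finset ι → M} {ε : ι → R} {s : Finset ι} {k : ι}
    {T : M →ₗ[R] M} (hT : ∀ τ, T (b τ) = b (symmDiff τ {k})) (hε : ε k * ε k = 1) (hk : k ∈ s) :
    T (characterSum b ε s) = ε k • characterSum b ε s := by
  calc T (characterSum b ε s)
      = ∑ τ ∈ s.powerset, (∏ j ∈ τ, ε j) • b (symmDiff τ {k}) := by
        simp only [characterSum, map_sum, map_smul, hT]
    _ = ∑ τ ∈ s.powerset, (∏ j ∈ symmDiff τ {k}, ε j) • b τ := by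
        refine Finset.sum_equiv (symmDiff_left_involutive {k}).toPerm (fun τ => ?_) (fun τ _ => ?_)
        · simp only [Function.Involutive.coe_toPerm, Finset.mem_powerset,
            symmDiff_singleton_subset_iff hk]
        · simp only [Function.Involutive.coe_toPerm, symmDiff_symmDiff_cancel_right]
    _ = ε k • characterSum b ε s := by
        simp only [characterSum, prod_symmDiff_singleton hε, mul_smul, Finset.smul_sum]

end CharacterSum

theorem exists_approx_eigenvectors_general {ι 𝕜 E : Type*} [DecidableEq ι] [RCLike 𝕜]
    [NormedAddCommGroup E] [NormedSpace 𝕜 E] {b : Finset ι → E} (hb : LinearIndependent 𝕜 b)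
    {T : ι → E →ₗ[𝕜] E} {s : Finset ι} (hT : ∀ k ∈ s, ∀ τ, T k (b τ) = b (symmDiff τ {k}))
    {ε : ι → 𝕜} (hε : ∀ k ∈ s, ε k * ε k = 1) :
    ∃ u : E, ‖u‖ = 1 ∧ ∀ k ∈ s, T k u = ε k • u := by
  refine ⟨(‖characterSum b ε s‖ : 𝕜)⁻¹ • characterSum b ε s,
    norm_smul_inv_norm (characterSum_ne_zero hb ε s), fun k hk => ?_⟩
  rw [map_smul, map_characterSum (hT k hk) (hε k hk) hk, smul_comm]

theorem orthonormal_Z : Orthonormal ℂ Z := by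
  refine orthonormal_iff_ite.2 fun σ τ => ?_
  rw [Z, lp.inner_single_left, Z, lp.single_apply, Pi.single_apply, RCLike.inner_apply, map_one,
    mul_one]

/-- Proposition 3.1: for `σ ∈ Γ`, there is a sequence `(u_n)_{n ≥ 1}` of unit vectors
such that `Ξ_k u_n = ε_σ(k) u_n` for all `n ≥ 1` and `k ∈ {0, ..., n}`, where
`ε_σ(k) = 1` if `k ∈ σ` and `ε_σ(k) = -1` otherwise. -/
theorem exists_approx_eigenvectors
    (Xi : ℕ → H →L[ℂ] H)
    (hXi : ∀ k σ, Xi k (Z σ) = Z (symmDiff σ {k}))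
    (σ : Finset ℕ) :
    ∃ u : ℕ → H, ∀ n : ℕ, 1 ≤ n →
      ‖u n‖ = 1 ∧ ∀ k : ℕ, k ≤ n →
        Xi k (u n) = (if k ∈ σ then (1 : ℂ) else -1) • u n := by
  choose u norm_u map_u using fun n => exists_approx_eigenvectors_general
    orthonormal_Z.linearIndependent (T := fun k => Xi k) (s := Finset.Iic n) (fun k _ => hXi k)
    (ε := fun k => if k ∈ σ then 1 else -1) (fun k _ => by split_ifs <;> norm_num)
  exact ⟨u, fun n _ => ⟨norm_u n, fun k hk => map_u n k (Finset.mem_Iic.2 hk)⟩⟩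
end
end

section
/- Let w be a weight on ℕ. Then both −|w| and |w| belong to spec(A_w), but neither is an eigenvalue of A_w: if ξ ∈ 𝔥 satisfies A_w ξ = |w| • ξ or A_w ξ = −|w| • ξ, then ξ = 0. -/
noncomputable section

/-!
Let `S ⊆ ℕ` be finite and let `ε` be a choice of signs. The character `σ ↦ ∏ i ∈ σ, ε i`, restricted
to the subsets of `S`, is an eigenvector of each `Ξ k` with `k ∈ S`, with eigenvalue `ε k`; hence
`∑ k ∈ S, ε k * w k` lies in the spectrum of `∑ k ∈ S, w k • Ξ k`. Non-invertible operators form a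
closed set, so this persists in the limit as `S` exhausts `ℕ`, and constant signs give `±|w|`.

That `±|w|` are not eigenvalues is a maximum principle. If `A ξ = μ • ξ` with `ξ ≠ 0`, then the
pointwise modulus of `ξ` attains its maximum at some `σ`, and it is strictly smaller at all but
finitely many of the `σ ∆ {k}`, because `ξ` vanishes at infinity. Evaluating the equation at `σ`
gives `‖μ‖ < |w|`.
-/

open Filter Function Topology
open scoped ENNReal symmDiff

section Spectrum

variable {𝕜 : Type*} [NontriviallyNormedField 𝕜]

theorem mem_spectrum_of_tendsto {A X : Type*} [NormedRing A] [NormedAlgebra 𝕜 A] [CompleteSpace A]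
    {l : Filter X} [l.NeBot] {a : X → A} {z : X → 𝕜} {a₀ : A} {z₀ : 𝕜} (ha : Tendsto a l (𝓝 a₀))
    (hz : Tendsto z l (𝓝 z₀)) (hmem : ∀ᶠ x in l, z x ∈ spectrum 𝕜 (a x)) :
    z₀ ∈ spectrum 𝕜 a₀ :=
  nonunits.isClosed.mem_of_tendsto (((continuous_algebraMap 𝕜 A).tendsto z₀).comp hz |>.sub ha) hmem

theorem mem_spectrum_of_apply_eq_smul {E : Type*} [NormedAddCommGroup E] [NormedSpace 𝕜 E]
    [CompleteSpace E] {T : E →L[𝕜] E} {z : 𝕜} {v : E} (hv : v ≠ 0) (h : T v = z • v) :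
    z ∈ spectrum 𝕜 T := by
  rw [ContinuousLinearMap.spectrum_eq]
  exact (Module.End.hasEigenvalue_of_hasEigenvector
    ⟨Module.End.mem_eigenspace_iff.mpr h, hv⟩).mem_spectrum

end Spectrum

section SequenceSpaces

variable {𝕜 α β E : Type*} [NormedAddCommGroup E] {p : ℝ≥0∞}

theorem memℓp_comp_equiv {f : α → E} (hf : Memℓp f p) (e : β ≃ α) : Memℓp (f ∘ e) p := by
  rcases p.trichotomy with rfl | rfl | hp
  · exact memℓp_zero (hf.finite_dsupport.preimage e.injective.injOn)
  · exact memℓp_infty (hf.bddAbove.mono (Set.range_comp_subset_range e fun a => ‖f a‖))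
  · exact memℓp_gen ((hf.summable hp).comp_injective e.injective)

theorem lp_finite_setOf_le_norm_apply (hp : p ≠ ∞) (f : lp (fun _ : α => E) p) {r : ℝ}
    (hr : 0 < r) : {a | r ≤ ‖f a‖}.Finite := by
  have hq : 0 < (max p 1).toReal := ENNReal.toReal_pos (by simp) (by simp [hp])
  have hsum := ((lp.memℓp f).of_exponent_ge (le_max_left p 1)).summable hq
  have hlt := hsum.tendsto_cofinite_zero.eventually_lt_const
    (Real.rpow_pos_of_pos hr (max p 1).toReal)
  refine (eventually_cofinite.mp hlt).subset fun a ha => not_lt.mpr ?_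
  exact Real.rpow_le_rpow hr.le ha hq.le

theorem lp_exists_forall_norm_apply_le (hp : p ≠ ∞) {f : lp (fun _ : α => E) p} (hf : f ≠ 0) :
    ∃ a, 0 < ‖f a‖ ∧ ∀ b, ‖f b‖ ≤ ‖f a‖ := by
  obtain ⟨c, hc⟩ : ∃ c, f c ≠ 0 := by
    by_contra! h
    exact hf (lp.ext (funext h))
  have hc_pos := norm_pos_iff.mpr hc
  obtain ⟨a, hca, hmax⟩ := Set.exists_max_image {b | ‖f c‖ ≤ ‖f b‖} (fun b => ‖f b‖)
    (lp_finite_setOf_le_norm_apply hp f hc_pos) ⟨c, le_refl ‖f c‖⟩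
  refine ⟨a, hc_pos.trans_le hca, fun b => ?_⟩
  rcases le_total ‖f c‖ ‖f b‖ with h | h
  · exact hmax b h
  · exact h.trans hca

variable [NormedRing 𝕜] [Module 𝕜 E] [IsBoundedSMul 𝕜 E] [Fact (1 ≤ p)]

variable (𝕜 E p) in
/-- Transport of `ℓᵖ` sequences along a bijection `e` of the index sets: `f` is sent to
`f ∘ e.symm`, so that the basis vector at `a` goes to the one at `e a`. -/
def lpReindex (e : α ≃ β) : lp (fun _ : α => E) p →ₗᵢ[𝕜] lp (fun _ : β => E) p where
  toFun f := ⟨f ∘ e.symm, memℓp_comp_equiv (lp.memℓp f) e.symm⟩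
  map_add' _ _ := rfl
  map_smul' _ _ := rfl
  norm_map' f := by
    rcases p.dichotomy with rfl | hp
    · exact e.symm.iSup_comp (g := fun a => ‖f a‖)
    · have hp_pos := zero_lt_one.trans_le hp
      rw [lp.norm_eq_tsum_rpow hp_pos, lp.norm_eq_tsum_rpow hp_pos]
      exact congrArg (· ^ _) (e.symm.tsum_eq fun a => ‖f a‖ ^ p.toReal)

@[simp]
theorem lpReindex_apply (e : α ≃ β) (f : lp (fun _ : α => E) p) (b : β) :
    lpReindex 𝕜 E p e f b = f (e.symm b) :=
  rfl

theorem lpReindex_single [DecidableEq α] [DecidableEq β] (e : α ≃ β) (a : α) (x : E) :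
    lpReindex 𝕜 E p e (lp.single p a x) = lp.single p (e a) x := by
  ext b
  simp [Pi.single_apply, Equiv.symm_apply_eq]

end SequenceSpaces

section PermutationOperators

variable {𝕜 ι α : Type*} [NontriviallyNormedField 𝕜] {p : ℝ≥0∞} [Fact (1 ≤ p)]

variable (𝕜 p) in
/-- The permutation operator on `ℓᵖ(α)` sending the basis vector at `a` to the one at `e a`. -/
abbrev permOp (e : Equiv.Perm α) : lp (fun _ : α => 𝕜) p →L[𝕜] lp (fun _ : α => 𝕜) p :=
  (lpReindex 𝕜 𝕜 p e).toContinuousLinearMap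

theorem eq_permOp_of_single [DecidableEq α] (hp : p ≠ ∞) {e : Equiv.Perm α}
    {T : lp (fun _ : α => 𝕜) p →L[𝕜] lp (fun _ : α => 𝕜) p}
    (hT : ∀ a, T (lp.single p a 1) = lp.single p (e a) 1) : T = permOp 𝕜 p e := by
  refine lp.ext_continuousLinearMap hp fun a => ContinuousLinearMap.ext_ring ?_
  exact (hT a).trans (lpReindex_single (𝕜 := 𝕜) e a 1).symm

variable [CompleteSpace 𝕜] {w : ι → 𝕜}

theorem summable_smul_permOp (hw : Summable fun k => ‖w k‖) (e : ι → Equiv.Perm α) :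
    Summable fun k => w k • permOp 𝕜 p (e k) := by
  refine Summable.of_norm_bounded hw fun k => ?_
  rw [norm_smul]
  exact mul_le_of_le_one_right (norm_nonneg _) (LinearIsometry.norm_toContinuousLinearMap_le _)

theorem hasSum_mul_apply_symm (hw : Summable fun k => ‖w k‖) (e : ι → Equiv.Perm α)
    (f : lp (fun _ : α => 𝕜) p) (a : α) :
    HasSum (fun k => w k * f ((e k).symm a)) ((∑' k, w k • permOp 𝕜 p (e k)) f a) :=
  ((summable_smul_permOp hw e).hasSum.mapL (ContinuousLinearMap.apply 𝕜 _ f)).mapL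
    (lp.evalCLM 𝕜 (fun _ : α => 𝕜) p a)

theorem norm_lt_tsum_norm_of_tsum_smul_permOp_apply_eq_smul (hp : p ≠ ∞)
    (hw : Summable fun k => ‖w k‖) (hw_supp : (support w).Infinite) {e : ι → Equiv.Perm α}
    (he : ∀ a, Injective fun k => (e k).symm a) {μ : 𝕜} {ξ : lp (fun _ : α => 𝕜) p} (hξ : ξ ≠ 0)
    (h : (∑' k, w k • permOp 𝕜 p (e k)) ξ = μ • ξ) : ‖μ‖ < ∑' k, ‖w k‖ := by
  obtain ⟨a, ha_pos, ha_max⟩ := lp_exists_forall_norm_apply_le hp hξ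
  obtain ⟨j, hj_supp, hj_lt⟩ : ∃ j ∈ support w, ‖ξ ((e j).symm a)‖ < ‖ξ a‖ := by
    have hfin := (lp_finite_setOf_le_norm_apply hp ξ ha_pos).preimage (he a).injOn
    obtain ⟨j, hj, hj'⟩ := hw_supp.exists_notMem_finite hfin
    exact ⟨j, hj, not_le.mp hj'⟩
  have hle : ∀ k, ‖w k * ξ ((e k).symm a)‖ ≤ ‖w k‖ * ‖ξ a‖ := fun k => by
    rw [norm_mul]
    exact mul_le_mul_of_nonneg_left (ha_max _) (norm_nonneg _)
  have hlt : ‖w j * ξ ((e j).symm a)‖ < ‖w j‖ * ‖ξ a‖ := by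
    rw [norm_mul]
    exact mul_lt_mul_of_pos_left hj_lt (norm_pos_iff.mpr hj_supp)
  have hbound := hw.mul_right ‖ξ a‖
  have hsum := Summable.of_nonneg_of_le (fun _ => norm_nonneg _) hle hbound
  refine lt_of_mul_lt_mul_right ?_ ha_pos.le
  calc ‖μ‖ * ‖ξ a‖ = ‖(∑' k, w k • permOp 𝕜 p (e k)) ξ a‖ := by
        rw [h, lp.coeFn_smul, Pi.smul_apply, norm_smul]
    _ = ‖∑' k, w k * ξ ((e k).symm a)‖ := by rw [(hasSum_mul_apply_symm hw e ξ a).tsum_eq]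
    _ ≤ ∑' k, ‖w k * ξ ((e k).symm a)‖ := norm_tsum_le_tsum_norm hsum
    _ < ∑' k, ‖w k‖ * ‖ξ a‖ := hsum.tsum_lt_tsum hle hlt hbound
    _ = (∑' k, ‖w k‖) * ‖ξ a‖ := tsum_mul_right

end PermutationOperators

section Toggles

variable {ι : Type*} [DecidableEq ι]

theorem prod_symmDiff_of_mul_self_eq_one {M : Type*} [CommMonoid M] {f : ι → M} {s t : Finset ι}
    (hf : ∀ i ∈ s ∩ t, f i * f i = 1) :
    ∏ i ∈ s ∆ t, f i = (∏ i ∈ s, f i) * ∏ i ∈ t, f i := by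
  have hinter : (∏ i ∈ s ∩ t, f i) * ∏ i ∈ s ∩ t, f i = 1 := by
    rw [← Finset.prod_mul_distrib, Finset.prod_eq_one hf]
  rw [symmDiff_def, Finset.sup_eq_union, Finset.prod_union disjoint_sdiff_sdiff,
    ← Finset.prod_inter_mul_prod_sdiff s t, ← Finset.prod_inter_mul_prod_sdiff t s,
    Finset.inter_comm t s, mul_mul_mul_comm, hinter, one_mul]

/-- The permutation `σ ↦ σ ∆ {k}` of the finite subsets of `ι`, which toggles the membership of
`k`. -/
def toggle (k : ι) : Equiv.Perm (Finset ι) :=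
  (symmDiff_left_involutive {k}).toPerm

theorem toggle_symm_apply (k : ι) (σ : Finset ι) : (toggle k).symm σ = σ ∆ {k} :=
  rfl

theorem toggle_symm_apply_injective (σ : Finset ι) : Injective fun k => (toggle k).symm σ :=
  (symmDiff_right_injective σ).comp Finset.singleton_injective

variable {𝕜 : Type*} [NontriviallyNormedField 𝕜] {p : ℝ≥0∞}

variable (p) in
/-- The truncated character `σ ↦ ∏ i ∈ σ, ε i` on the subsets `σ` of the finite set `S`, extended
by zero: for signs `ε` it is a joint eigenvector of the operators toggling the elements of `S`. -/
def truncatedCharacter (ε : ι → 𝕜) (S : Finset ι) : lp (fun _ : Finset ι => 𝕜) p :=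
  ∑ σ ∈ S.powerset, lp.single p σ (∏ i ∈ σ, ε i)

theorem truncatedCharacter_apply (ε : ι → 𝕜) (S σ : Finset ι) :
    truncatedCharacter p ε S σ = if σ ⊆ S then ∏ i ∈ σ, ε i else 0 := by
  simp only [truncatedCharacter, lp.coeFn_sum, lp.coeFn_single, Finset.sum_apply,
    Finset.sum_pi_single, Finset.mem_powerset]

theorem truncatedCharacter_ne_zero (ε : ι → 𝕜) (S : Finset ι) : truncatedCharacter p ε S ≠ 0 :=
  fun h => by simpa [h] using truncatedCharacter_apply (p := p) ε S ∅

variable [Fact (1 ≤ p)] {ε : ι → 𝕜}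

theorem permOp_toggle_truncatedCharacter {S : Finset ι} {k : ι} (hk : k ∈ S)
    (hε : ε k * ε k = 1) :
    permOp 𝕜 p (toggle k) (truncatedCharacter p ε S) = ε k • truncatedCharacter p ε S := by
  ext σ
  have hsubset : σ ∆ {k} ⊆ S ↔ σ ⊆ S := by
    simp only [Finset.subset_iff, Finset.mem_symmDiff, Finset.mem_singleton]
    grind
  have hprod : ∏ i ∈ σ ∆ {k}, ε i = ε k * ∏ i ∈ σ, ε i := by
    have hinter : ∀ i ∈ σ ∩ {k}, ε i * ε i = 1 := fun i hi => by
      rwa [Finset.mem_singleton.mp (Finset.mem_inter.mp hi).2]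
    rw [prod_symmDiff_of_mul_self_eq_one hinter, Finset.prod_singleton, mul_comm]
  simp only [LinearIsometry.coe_toContinuousLinearMap, lpReindex_apply, toggle_symm_apply,
    truncatedCharacter_apply, hsubset, hprod, lp.coeFn_smul, Pi.smul_apply, smul_eq_mul, mul_ite,
    mul_zero]

variable [CompleteSpace 𝕜] {w : ι → 𝕜}

theorem tsum_mul_mem_spectrum_tsum_smul_permOp_toggle (hw : Summable fun k => ‖w k‖)
    (hε : ∀ k, ε k * ε k = 1) :
    ∑' k, ε k * w k ∈ spectrum 𝕜 (∑' k, w k • permOp 𝕜 p (toggle k)) := by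
  have hεw : Summable fun k => ε k * w k := .of_norm <| by
    have hε_norm : ∀ k, ‖ε k‖ = 1 := fun k => by
      rcases mul_self_eq_one_iff.mp (hε k) with h | h <;> simp [h]
    simpa only [norm_mul, hε_norm, one_mul] using hw
  refine mem_spectrum_of_tendsto (summable_smul_permOp hw toggle).hasSum hεw.hasSum
    (Eventually.of_forall fun S => ?_)
  refine mem_spectrum_of_apply_eq_smul (truncatedCharacter_ne_zero ε S) ?_
  rw [sum_apply, Finset.sum_smul]
  refine Finset.sum_congr rfl fun k hk => ?_
  rw [smul_apply, permOp_toggle_truncatedCharacter hk (hε k), smul_smul, mul_comm]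

end Toggles

theorem endpoints_in_spectrum_not_eigenvalues_general {ι 𝕜 : Type*} [DecidableEq ι]
    [NontriviallyNormedField 𝕜] [CompleteSpace 𝕜] {p : ℝ≥0∞} [Fact (1 ≤ p)] (hp : p ≠ ∞)
    (w : ι → 𝕜) (hw_supp : (support w).Infinite) (hw_sum : Summable fun k => ‖w k‖)
    (Xi : ι → lp (fun _ : Finset ι => 𝕜) p →L[𝕜] lp (fun _ : Finset ι => 𝕜) p)
    (hXi : ∀ k σ, Xi k (lp.single p σ 1) = lp.single p (σ ∆ {k}) 1)
    (A : lp (fun _ : Finset ι => 𝕜) p →L[𝕜] lp (fun _ : Finset ι => 𝕜) p)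
    (hA : A = ∑' k, w k • Xi k) :
    (∀ ε : ι → 𝕜, (∀ k, ε k * ε k = 1) → ∑' k, ε k * w k ∈ spectrum 𝕜 A) ∧
      ∀ (μ : 𝕜) (ξ : lp (fun _ : Finset ι => 𝕜) p), ξ ≠ 0 → A ξ = μ • ξ → ‖μ‖ < ∑' k, ‖w k‖ := by
  obtain rfl : Xi = fun k => permOp 𝕜 p (toggle k) :=
    funext fun k => eq_permOp_of_single hp (hXi k)
  subst hA
  refine ⟨fun ε hε => tsum_mul_mem_spectrum_tsum_smul_permOp_toggle hw_sum hε, fun μ ξ hξ h => ?_⟩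
  exact norm_lt_tsum_norm_of_tsum_smul_permOp_apply_eq_smul hp hw_sum hw_supp
    toggle_symm_apply_injective hξ h

/-- Theorem 3.6: both `-|w|` and `|w|` belong to `spec(A_w)`, but neither is an
eigenvalue of `A_w`. -/
theorem endpoints_in_spectrum_not_eigenvalues
    (w : ℕ → ℝ) (hw_pos : ∀ k, 0 < w k) (hw_sum : Summable w)
    (Xi : ℕ → H →L[ℂ] H)
    (hXi : ∀ k σ, Xi k (Z σ) = Z (symmDiff σ {k}))
    (A : H →L[ℂ] H) (hA : A = ∑' k, (w k : ℂ) • Xi k) :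
    (-((∑' k, w k : ℝ) : ℂ)) ∈ spectrum ℂ A ∧
    ((∑' k, w k : ℝ) : ℂ) ∈ spectrum ℂ A ∧
    (∀ ξ : H, A ξ = ((∑' k, w k : ℝ) : ℂ) • ξ ∨
        A ξ = (-((∑' k, w k : ℝ) : ℂ)) • ξ → ξ = 0) := by
  have hnorm : ∀ k, ‖(w k : ℂ)‖ = w k := fun k => Complex.norm_of_nonneg (hw_pos k).le
  have hsupp : support (fun k => (w k : ℂ)) = Set.univ := by
    ext k; simp [(hw_pos k).ne']
  have htotal : ‖((∑' k, w k : ℝ) : ℂ)‖ = ∑' k, ‖(w k : ℂ)‖ := by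
    simp only [hnorm, Complex.norm_of_nonneg (tsum_nonneg (hw_pos · |>.le))]
  obtain ⟨hspec, heig⟩ := endpoints_in_spectrum_not_eigenvalues_general ENNReal.ofNat_ne_top
    (fun k => (w k : ℂ)) (hsupp ▸ Set.infinite_univ) (by simpa only [hnorm]) Xi hXi A hA
  refine ⟨?_, ?_, fun ξ h => by_contra fun hξ => ?_⟩
  · simpa [tsum_neg, Complex.ofReal_tsum] using hspec (fun _ => -1) (by simp)
  · simpa [Complex.ofReal_tsum] using hspec (fun _ => 1) (by simp)
  · rcases h with h | h
    · exact (heig _ ξ hξ h).ne htotal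
    · exact (heig _ ξ hξ h).ne ((norm_neg _).trans htotal)
end
end
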